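/- Lemma 4, part (i): Let N, K, F be positive integers, M ≥ 0 a real, W_1,…,W_N i.i.d. uniform on {1,…,2^F}, V_k = g_k(W_1,…,W_N) for k ∈ {1,…,K} where each g_k maps into a set of size at most ⌊2^{F·M}⌋, and let D = (D_1,…,D_K) be uniformly distributed on {1,…,N}^K, independent of (W_1,…,W_N). Fix ℓ ∈ {1,…,K} and for k ∈ {1,…,ℓ} define β_k := (1/F)·I(W_{D_k}; V_1,…,V_k | W_{D_1},…,W_{D_{k−1}}, D). Then for every k ∈ {1,…,ℓ}: β_k ≤ k·M/N. -/

import Mathlib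

/-- Probability that the discrete random variable `X` (on finite space `Ω` with
probability mass function `p`) takes the value `x`. -/
noncomputable def pr {Ω : Type*} [Fintype Ω] {α : Type*} [DecidableEq α]
    (p : Ω → ℝ) (X : Ω → α) (x : α) : ℝ :=
  ∑ ω ∈ Finset.univ.filter (fun ω => X ω = x), p ω

/-- Shannon entropy (base 2) of the discrete random variable `X`. -/
noncomputable def ent {Ω : Type*} [Fintype Ω] {α : Type*} [DecidableEq α]
    (p : Ω → ℝ) (X : Ω → α) : ℝ :=
  -∑ x ∈ Finset.univ.image X, pr p X x * Real.logb 2 (pr p X x)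

/-- Conditional mutual information `I(X;Y|Z) = H(X,Z) + H(Y,Z) − H(X,Y,Z) − H(Z)`
(base 2). -/
noncomputable def cmi {Ω : Type*} [Fintype Ω] {α β γ : Type*}
    [DecidableEq α] [DecidableEq β] [DecidableEq γ]
    (p : Ω → ℝ) (X : Ω → α) (Y : Ω → β) (Z : Ω → γ) : ℝ :=
  ent p (fun ω => (X ω, Z ω)) + ent p (fun ω => (Y ω, Z ω))
    - ent p (fun ω => (X ω, Y ω, Z ω)) - ent p Z


namespace BetaBound

open Classical in
/-- Size of the fibre of `X` through `ω`. -/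
noncomputable def cnt {Ω α : Type*} [Fintype Ω] (X : Ω → α) (ω : Ω) : ℝ :=
  ∑ a : Ω, if X a = X ω then (1 : ℝ) else 0

/-- Sum of the logarithms of the fibre sizes. -/
noncomputable def L {Ω α : Type*} [Fintype Ω] (X : Ω → α) : ℝ :=
  ∑ ω : Ω, Real.logb 2 (cnt X ω)

variable {Ω α β γ : Type*} [Fintype Ω]

theorem cnt_pos (X : Ω → α) (ω : Ω) : 0 < cnt X ω := by
  classical
  unfold cnt
  apply Finset.sum_pos'
  · intro i _; split_ifs <;> norm_num
  · exact ⟨ω, Finset.mem_univ _, by simp⟩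

theorem cnt_congr {X : Ω → α} {ω ω' : Ω} (h : X ω = X ω') : cnt X ω = cnt X ω' := by
  unfold cnt; rw [h]

theorem L_congr {X : Ω → α} {Y : Ω → β} (h : ∀ a b, X a = X b ↔ Y a = Y b) : L X = L Y := by
  unfold L cnt
  refine Finset.sum_congr rfl fun a _ => ?_
  congr 1
  exact Finset.sum_congr rfl fun b _ => by
    have := h b a
    split_ifs <;> tauto

theorem cnt_card [DecidableEq α] (X : Ω → α) (ω : Ω) :
    cnt X ω = ((Finset.univ.filter fun a => X a = X ω).card : ℝ) := by
  rw [Finset.card_filter]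
  push_cast
  unfold cnt
  exact Finset.sum_congr rfl fun b _ => by
    split_ifs <;> rfl

theorem ent_eq [Nonempty Ω] [DecidableEq α] (X : Ω → α) :
    ent (fun _ : Ω => (1 : ℝ) / (Fintype.card Ω : ℝ)) X
      = Real.logb 2 (Fintype.card Ω) - L X / Fintype.card Ω := by
  classical
  have hc : (Fintype.card Ω : ℝ) ≠ 0 := by
    have := Fintype.card_pos (α := Ω); positivity
  have hp : ∀ ω, pr (fun _ : Ω => (1 : ℝ) / (Fintype.card Ω : ℝ)) X (X ω)
      = cnt X ω / Fintype.card Ω := by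
    intro ω
    unfold pr cnt
    rw [Finset.sum_filter, Finset.sum_div]
    refine Finset.sum_congr rfl fun a _ => ?_
    split_ifs <;> simp
  have h1 : ∑ x ∈ Finset.univ.image X, pr (fun _ : Ω => (1 : ℝ) / (Fintype.card Ω : ℝ)) X x *
        Real.logb 2 (pr (fun _ : Ω => (1 : ℝ) / (Fintype.card Ω : ℝ)) X x)
      = ∑ ω : Ω, (1 : ℝ) / (Fintype.card Ω : ℝ) * Real.logb 2 (cnt X ω / Fintype.card Ω) := by
    rw [← Finset.sum_fiberwise_of_maps_to (s := Finset.univ) (t := Finset.univ.image X) (g := X)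
      (fun a _ => Finset.mem_image_of_mem X (Finset.mem_univ a))]
    refine Finset.sum_congr rfl fun x _ => ?_
    conv_lhs => rw [pr, Finset.sum_mul]
    refine Finset.sum_congr rfl fun a ha => ?_
    rw [← hp a, (Finset.mem_filter.1 ha).2]
    rfl
  unfold ent
  rw [h1, ← Finset.mul_sum]
  have h2 : ∀ ω, Real.logb 2 (cnt X ω / Fintype.card Ω)
      = Real.logb 2 (cnt X ω) - Real.logb 2 (Fintype.card Ω) := fun ω =>
    Real.logb_div (cnt_pos X ω).ne' hc
  simp only [h2, Finset.sum_sub_distrib, Finset.sum_const, Finset.card_univ, nsmul_eq_mul]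
  unfold L
  field_simp
  ring

theorem cmi_eq [Nonempty Ω] [DecidableEq α] [DecidableEq β] [DecidableEq γ]
    (X : Ω → α) (Y : Ω → β) (Z : Ω → γ) :
    cmi (fun _ : Ω => (1 : ℝ) / (Fintype.card Ω : ℝ)) X Y Z
      = (L (fun ω => (X ω, Y ω, Z ω)) + L Z - L (fun ω => (X ω, Z ω)) - L (fun ω => (Y ω, Z ω)))
        / Fintype.card Ω := by
  unfold cmi
  simp only [ent_eq]
  ring

/-- Sum over (part of) a fibre of the reciprocal fibre size is at most one. -/
theorem fibre_sum_le (T : Ω → α) (p : Ω → Prop) [DecidablePred p]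
    (hp : ∀ a b, p a → p b → T a = T b) :
    ∑ ω, (if p ω then 1 / cnt T ω else 0) ≤ 1 := by
  classical
  by_cases h : ∃ a, p a
  · obtain ⟨a, ha⟩ := h
    have : ∀ ω, (if p ω then 1 / cnt T ω else 0) ≤ (if T ω = T a then (1:ℝ) else 0) / cnt T a := by
      intro ω
      split_ifs with h1 h2 h2
      · rw [cnt_congr h2]
      · exact absurd (hp _ _ h1 ha) h2
      · have := cnt_pos T a; positivity
      · simp
    refine (Finset.sum_le_sum fun ω _ => this ω).trans ?_
    rw [← Finset.sum_div]
    exact (div_self (cnt_pos T a).ne').le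
  · push Not at h
    simp [h]

theorem sum_logb_nonpos (r : Ω → ℝ) (hr : ∀ ω, 0 < r ω) (hs : ∑ ω, r ω ≤ Fintype.card Ω) :
    ∑ ω, Real.logb 2 (r ω) ≤ 0 := by
  have h2 : 0 < Real.log 2 := Real.log_pos (by norm_num)
  have : ∑ ω, Real.log (r ω) ≤ 0 := by
    calc ∑ ω, Real.log (r ω) ≤ ∑ ω, (r ω - 1) :=
          Finset.sum_le_sum fun ω _ => Real.log_le_sub_one_of_pos (hr ω)
      _ ≤ 0 := by simp [Finset.sum_sub_distrib, hs]
  simp only [Real.logb, ← Finset.sum_div]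
  exact div_nonpos_of_nonpos_of_nonneg this h2.le

theorem L_super (X : Ω → α) (Y : Ω → β) (Z : Ω → γ) :
    L (fun ω => (X ω, Z ω)) + L (fun ω => (Y ω, Z ω))
      ≤ L (fun ω => (X ω, Y ω, Z ω)) + L Z := by
  classical
  set T := fun ω => (X ω, Y ω, Z ω) with hT
  have key := sum_logb_nonpos
    (fun ω => cnt (fun ω => (X ω, Z ω)) ω * cnt (fun ω => (Y ω, Z ω)) ω / (cnt T ω * cnt Z ω))
    (fun ω => div_pos (mul_pos (cnt_pos _ _) (cnt_pos _ _)) (mul_pos (cnt_pos _ _) (cnt_pos _ _)))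
    (by
      have e : ∀ ω, cnt (fun ω => (X ω, Z ω)) ω * cnt (fun ω => (Y ω, Z ω)) ω / (cnt T ω * cnt Z ω)
          = ∑ a, ∑ b, (if (X a, Z a) = (X ω, Z ω) ∧ (Y b, Z b) = (Y ω, Z ω)
              then 1 / cnt T ω else 0) * (if Z b = Z a then 1 / cnt Z a else 0) := by
        intro ω
        conv_lhs => rw [cnt, cnt, Finset.sum_mul_sum]
        simp only [Finset.sum_div]
        refine Finset.sum_congr rfl fun a _ => Finset.sum_congr rfl fun b _ => ?_
        by_cases h1 : (X a, Z a) = (X ω, Z ω)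
        · by_cases h2 : (Y b, Z b) = (Y ω, Z ω)
          · have h3 : Z a = Z ω := (Prod.ext_iff.1 h1).2
            have h4 : Z b = Z ω := (Prod.ext_iff.1 h2).2
            rw [if_pos h1, if_pos h2, if_pos ⟨h1, h2⟩, if_pos (h4.trans h3.symm), cnt_congr h3]
            field_simp
          · simp [h2]
        · simp [h1]
      simp only [e]
      rw [Finset.sum_comm]
      have : ∀ a, ∑ ω, ∑ b, (if (X a, Z a) = (X ω, Z ω) ∧ (Y b, Z b) = (Y ω, Z ω)
              then 1 / cnt T ω else 0) * (if Z b = Z a then 1 / cnt Z a else 0) ≤ 1 := by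
        intro a
        rw [Finset.sum_comm]
        have h1 : ∀ b, ∑ ω, (if (X a, Z a) = (X ω, Z ω) ∧ (Y b, Z b) = (Y ω, Z ω)
              then 1 / cnt T ω else 0) * (if Z b = Z a then 1 / cnt Z a else 0)
              ≤ (if Z b = Z a then 1 / cnt Z b else 0) := by
          intro b
          rw [← Finset.sum_mul]
          have h0 : (if Z b = Z a then 1 / cnt Z a else 0)
              = (if Z b = Z a then 1 / cnt Z b else 0) := by
            split_ifs with h
            · rw [cnt_congr h]
            · rfl
          rw [h0]
          refine mul_le_of_le_one_left ?_ ?_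
          · have := cnt_pos Z b
            split_ifs <;> positivity
          · refine fibre_sum_le T _ ?_
            rintro c d ⟨h1, h2⟩ ⟨h3, h4⟩
            simp only [Prod.mk.injEq] at h1 h2 h3 h4
            simp only [hT, Prod.mk.injEq]
            exact ⟨h1.1.symm.trans h3.1, h2.1.symm.trans h4.1, h1.2.symm.trans h3.2⟩
        refine (Finset.sum_le_sum fun b _ => h1 b).trans ?_
        exact fibre_sum_le Z (fun b => Z b = Z a) (fun c d h h' => h.trans h'.symm)
      refine (Finset.sum_le_sum fun a _ => this a).trans ?_
      simp)
  have e2 : ∀ ω, Real.logb 2 (cnt (fun ω => (X ω, Z ω)) ω * cnt (fun ω => (Y ω, Z ω)) ω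
        / (cnt T ω * cnt Z ω)) = Real.logb 2 (cnt (fun ω => (X ω, Z ω)) ω)
        + Real.logb 2 (cnt (fun ω => (Y ω, Z ω)) ω)
        - (Real.logb 2 (cnt T ω) + Real.logb 2 (cnt Z ω)) := by
    intro ω
    have h1 := (cnt_pos (fun ω => (X ω, Z ω)) ω).ne'
    have h2 := (cnt_pos (fun ω => (Y ω, Z ω)) ω).ne'
    have h3 := (cnt_pos T ω).ne'
    have h4 := (cnt_pos Z ω).ne'
    rw [Real.logb_div (mul_ne_zero h1 h2) (mul_ne_zero h3 h4), Real.logb_mul h1 h2,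
      Real.logb_mul h3 h4]
  simp only [e2, Finset.sum_sub_distrib, Finset.sum_add_distrib] at key
  unfold L
  linarith

theorem L_card (G : Ω → β) (Z : Ω → γ) (I : Finset β) (hI : ∀ ω, G ω ∈ I) (m : ℝ) (hm0 : 0 < m)
    (hm : (I.card : ℝ) ≤ m) :
    L Z ≤ L (fun ω => (G ω, Z ω)) + Fintype.card Ω * Real.logb 2 m := by
  classical
  set T := fun ω => (G ω, Z ω) with hT
  have key := sum_logb_nonpos (fun ω => cnt Z ω / (cnt T ω * m))
    (fun ω => div_pos (cnt_pos _ _) (mul_pos (cnt_pos _ _) hm0))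
    (by
      have e : ∀ ω, cnt Z ω / (cnt T ω * m)
          = (∑ a, ∑ t ∈ I, (if G ω = t ∧ Z ω = Z a then 1 / cnt T ω else 0)) / m := by
        intro ω
        conv_lhs => rw [cnt]
        rw [← div_div, Finset.sum_div]
        congr 1
        refine Finset.sum_congr rfl fun a _ => ?_
        rw [Finset.sum_eq_single (G ω)]
        · by_cases h : Z a = Z ω
          · simp [h]
          · simp [h, Ne.symm h]
        · intro b _ hb
          simp [Ne.symm hb]
        · intro h; exact absurd (hI ω) h
      simp only [e]
      rw [← Finset.sum_div, div_le_iff₀ hm0, Finset.sum_comm]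
      have : ∀ a, ∑ ω, ∑ t ∈ I, (if G ω = t ∧ Z ω = Z a then 1 / cnt T ω else 0) ≤ m := by
        intro a
        rw [Finset.sum_comm]
        refine (Finset.sum_le_sum (g := fun _ => (1:ℝ)) fun t _ => ?_).trans (by simpa using hm)
        refine fibre_sum_le T _ ?_
        rintro c d ⟨h1, h2⟩ ⟨h3, h4⟩
        simp only [hT, Prod.mk.injEq]
        exact ⟨h1.trans h3.symm, h2.trans h4.symm⟩
      refine (Finset.sum_le_sum fun a _ => this a).trans ?_
      simp)
  have e2 : ∀ ω, Real.logb 2 (cnt Z ω / (cnt T ω * m)) = Real.logb 2 (cnt Z ω)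
        - (Real.logb 2 (cnt T ω) + Real.logb 2 m) := by
    intro ω
    have h3 := (cnt_pos T ω).ne'
    have h4 := (cnt_pos Z ω).ne'
    rw [Real.logb_div h4 (mul_ne_zero h3 hm0.ne'), Real.logb_mul h3 hm0.ne']
  simp only [e2, Finset.sum_sub_distrib, Finset.sum_add_distrib, Finset.sum_const,
    Finset.card_univ, nsmul_eq_mul] at key
  unfold L
  linarith

theorem L_prod {A B : Type*} [Fintype A] [Fintype B] (X : A × B → α) (Y : B → A → β)
    (h : ∀ a d a' d', X (a, d) = X (a', d') ↔ d = d' ∧ Y d a = Y d a') :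
    L X = ∑ d, L (Y d) := by
  classical
  unfold L
  rw [Fintype.sum_prod_type, Finset.sum_comm]
  refine Finset.sum_congr rfl fun d _ => Finset.sum_congr rfl fun a _ => ?_
  congr 1
  unfold cnt
  rw [Fintype.sum_prod_type, Finset.sum_comm, Finset.sum_eq_single d]
  · simp [h]
  · intro b _ hb
    simp [h, hb]
  · simp

/-- Restriction of `w` to coordinates in `S`. -/
def R {N : ℕ} {Q : Type*} (S : Finset (Fin N)) (w : Fin N → Q) : Fin N → Option Q :=
  fun i => if i ∈ S then some (w i) else none

theorem R_eq {N : ℕ} {Q : Type*} (S : Finset (Fin N)) (w w' : Fin N → Q) :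
    R S w = R S w' ↔ ∀ i ∈ S, w i = w' i := by
  unfold R
  constructor
  · intro h i hi
    have := congrFun h i
    simpa [hi] using this
  · intro h
    funext i
    by_cases hi : i ∈ S
    · simp [hi, h i hi]
    · simp [hi]

theorem L_R {N F : ℕ} (S : Finset (Fin N)) :
    L (R S : (Fin N → Fin (2 ^ F)) → _)
      = Fintype.card (Fin N → Fin (2 ^ F)) * ((F : ℝ) * (N - S.card)) := by
  classical
  have : ∀ w : Fin N → Fin (2 ^ F), cnt (R S) w = ((2:ℝ) ^ F) ^ (N - S.card) := by
    intro w
    rw [cnt_card]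
    have h : (Finset.univ.filter fun a : Fin N → Fin (2 ^ F) => R S a = R S w)
        = Fintype.piFinset (fun i => if i ∈ S then {w i} else Finset.univ) := by
      ext a
      simp only [Finset.mem_filter, Finset.mem_univ, true_and, R_eq, Fintype.mem_piFinset]
      refine forall_congr' fun i => ?_
      by_cases hi : i ∈ S <;> simp [hi]
    have h' : (Finset.univ.filter fun a : Fin N → Fin (2 ^ F) => R S a = R S w).card
        = (2 ^ F) ^ (N - S.card) := by
      rw [h, Fintype.card_piFinset]
      have : ∀ i : Fin N, (if i ∈ S then {w i} else (Finset.univ : Finset (Fin (2 ^ F)))).card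
          = if i ∈ S then 1 else 2 ^ F := by
        intro i; split_ifs <;> simp
      simp only [this]
      rw [Finset.prod_ite]
      simp only [Finset.prod_const, one_pow, one_mul]
      congr 1
      have := Finset.card_compl S
      rw [Fintype.card_fin] at this
      rw [← this]
      congr 1
      ext; simp
    rw [h']
    push_cast
    ring
  unfold L
  simp only [this, Finset.sum_const, Finset.card_univ, nsmul_eq_mul]
  congr 1
  rw [← pow_mul, Real.logb_pow, Real.logb_self_eq_one (by norm_num)]
  have hS : S.card ≤ N := by simpa using S.card_le_univ
  push_cast [Nat.cast_sub hS]
  ring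

/-- The function `φ`. -/
noncomputable def phi {N F : ℕ} {τ : Type*} (G : (Fin N → Fin (2 ^ F)) → τ) (S : Finset (Fin N)) :
    ℝ := L (fun w => (G w, R S w)) - L (R S : (Fin N → Fin (2 ^ F)) → _)

theorem phi_step {N F : ℕ} {τ : Type*} (G : (Fin N → Fin (2 ^ F)) → τ) (S T : Finset (Fin N))
    (n : Fin N) (hn : n ∉ T) :
    phi G (insert n S) - phi G S ≤ phi G (insert n (S ∪ T)) - phi G (S ∪ T) := by
  classical
  by_cases hS : n ∈ S
  · rw [Finset.insert_eq_of_mem hS, Finset.insert_eq_of_mem (Finset.mem_union_left _ hS)]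
    simp
  have hST : n ∉ S ∪ T := by simp [hn, hS]
  have h := L_super (R T : (Fin N → Fin (2 ^ F)) → _) (fun w => w n) (fun w => (G w, R S w))
  have e1 : L (fun w => (R T w, G w, R S w)) = L (fun w => (G w, R (S ∪ T) w)) := by
    apply L_congr; intro a b
    simp only [Prod.mk.injEq, R_eq, Finset.mem_union]
    grind
  have e2 : L (fun w => (w n, G w, R S w)) = L (fun w => (G w, R (insert n S) w)) := by
    apply L_congr; intro a b
    simp only [Prod.mk.injEq, R_eq, Finset.mem_insert]
    grind
  have e3 : L (fun w => (R T w, w n, G w, R S w)) = L (fun w => (G w, R (insert n (S ∪ T)) w)) := by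
    apply L_congr; intro a b
    simp only [Prod.mk.injEq, R_eq, Finset.mem_insert, Finset.mem_union]
    grind
  rw [e1, e2, e3] at h
  unfold phi
  simp only [L_R, Finset.card_insert_of_notMem hS, Finset.card_insert_of_notMem hST]
  push_cast
  nlinarith

theorem phi_sum {N F : ℕ} {τ : Type*} (G : (Fin N → Fin (2 ^ F)) → τ) (S T : Finset (Fin N)) :
    ∑ n ∈ T, (phi G (insert n S) - phi G S) ≤ phi G (S ∪ T) - phi G S := by
  classical
  induction T using Finset.induction_on with
  | empty => simp
  | insert n T hn ih =>
    rw [Finset.sum_insert hn, Finset.union_insert]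
    linarith [phi_step G S T n hn]

theorem phi_univ {N F : ℕ} {τ : Type*} (G : (Fin N → Fin (2 ^ F)) → τ) :
    phi G Finset.univ = 0 := by
  unfold phi
  rw [sub_eq_zero]
  apply L_congr; intro a b
  simp only [Prod.mk.injEq, R_eq]
  constructor
  · exact fun h => h.2
  · intro h
    have : a = b := funext fun i => h i (Finset.mem_univ i)
    subst this; simp

theorem phi_bound {N F : ℕ} {τ : Type*} (G : (Fin N → Fin (2 ^ F)) → τ) (S : Finset (Fin N))
    (I : Finset τ) (hI : ∀ ω, G ω ∈ I) (m : ℝ) (hm0 : 0 < m) (hm : (I.card : ℝ) ≤ m) :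
    ∑ n, (phi G (insert n S) - phi G S)
      ≤ Fintype.card (Fin N → Fin (2 ^ F)) * Real.logb 2 m := by
  have h1 := phi_sum G S Finset.univ
  rw [Finset.union_eq_right.2 (Finset.subset_univ S), phi_univ] at h1
  have h2 := L_card G (R S) I hI m hm0 hm
  have h3 : phi G S = L (fun w => (G w, R S w)) - L (R S : (Fin N → Fin (2 ^ F)) → _) := rfl
  linarith

theorem avg {N K : ℕ} (hN : 0 < N) (κ : Fin K) (S : (Fin K → Fin N) → Finset (Fin N))
    (hS : ∀ d d', (∀ j, j ≠ κ → d j = d' j) → S d = S d') (t : Fin N → Finset (Fin N) → ℝ) (c : ℝ)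
    (ht : ∀ S, ∑ n, t n S ≤ c) :
    N * ∑ d : Fin K → Fin N, t (d κ) (S d) ≤ Fintype.card (Fin K → Fin N) * c := by
  classical
  haveI : NeZero N := ⟨hN.ne'⟩
  have h1 : ∀ n : Fin N, ∑ d : Fin K → Fin N, t (d κ) (S d)
      = ∑ d : Fin K → Fin N, t (d κ + n) (S d) := by
    intro n
    rw [← Equiv.sum_comp (Equiv.addRight (Pi.single κ n : Fin K → Fin N))]
    refine Finset.sum_congr rfl fun d _ => ?_
    rw [hS ((Equiv.addRight (Pi.single κ n : Fin K → Fin N)) d) d]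
    · simp
    · intro j hj
      simp [hj]
  have h2 : (N : ℝ) * ∑ d : Fin K → Fin N, t (d κ) (S d)
      = ∑ n : Fin N, ∑ d : Fin K → Fin N, t (d κ + n) (S d) := by
    rw [← Finset.sum_congr rfl fun n _ => h1 n]
    simp
  rw [h2, Finset.sum_comm]
  refine (Finset.sum_le_sum (g := fun _ => c) fun d _ => ?_).trans (by simp)
  exact (Equiv.sum_comp (Equiv.addLeft (d κ)) (fun n => t n (S d))).le.trans (ht _)

end BetaBound

/-- **Lemma 4, part (i).** The sample space is
`Ω = (Fin N → Fin (2^F)) × (Fin K → Fin N)` with the uniform distribution, so the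
messages `W = ω.1` are i.i.d. uniform and the demand vector `D = ω.2` is uniform
on `{1,…,N}^K` and independent of the messages. With caches
`V_k = g_k(W_1,…,W_N)` of size at most `⌊2^{F·M}⌋`, for every `ℓ ∈ {1,…,K}` and
every `k ∈ {1,…,ℓ}` (below `k : Fin ℓ` is 0-based, so the receiver is `k+1`):
`β_k := (1/F)·I(W_{D_k}; V_1,…,V_k | W_{D_1},…,W_{D_{k−1}}, D) ≤ k·M/N`. -/
theorem beta_bound_i
    (N K F : ℕ) (hN : 0 < N) (hK : 0 < K) (hF : 0 < F)
    (M : ℝ) (hM : 0 ≤ M)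
    (V : Fin K → Type) [∀ k, Fintype (V k)] [∀ k, DecidableEq (V k)]
    (hV : ∀ k, Fintype.card (V k) ≤ ⌊(2 : ℝ) ^ ((F : ℝ) * M)⌋₊)
    (g : ∀ k : Fin K, (Fin N → Fin (2 ^ F)) → V k)
    (ℓ : ℕ) (hℓ1 : 1 ≤ ℓ) (hℓ2 : ℓ ≤ K)
    (k : Fin ℓ) :
    (1 / (F : ℝ)) *
        cmi (fun _ : (Fin N → Fin (2 ^ F)) × (Fin K → Fin N) =>
              (1 : ℝ) / (Fintype.card ((Fin N → Fin (2 ^ F)) × (Fin K → Fin N)) : ℝ))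
          (fun ω => ω.1 (ω.2 (Fin.castLE hℓ2 k)))
          (fun ω => fun i : Fin K =>
            if (i : ℕ) ≤ (k : ℕ) then some (g i ω.1) else none)
          (fun ω =>
            ((fun j : Fin K =>
                if (j : ℕ) < (k : ℕ) then some (ω.1 (ω.2 j)) else none), ω.2))
      ≤ ((k : ℕ) + 1 : ℝ) * M / (N : ℝ) := by
  classical
  have hQ : 0 < 2 ^ F := by positivity
  haveI : Nonempty (Fin N) := ⟨⟨0, hN⟩⟩
  haveI : Nonempty (Fin (2 ^ F)) := ⟨⟨0, hQ⟩⟩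
  set κ : Fin K := Fin.castLE hℓ2 k with hκ
  have hκv : (κ : ℕ) = k := rfl
  set G : (Fin N → Fin (2 ^ F)) → (∀ i : Fin K, Option (V i)) := fun w => fun i : Fin K =>
            if (i : ℕ) ≤ (k : ℕ) then some (g i w) else none with hG
  let S : (Fin K → Fin N) → Finset (Fin N) := fun d =>
    (Finset.univ.filter fun j : Fin K => (j : ℕ) < (k : ℕ)).image d
  have hP : ∀ (d : Fin K → Fin N) (w w' : Fin N → Fin (2 ^ F)),
      ((fun j : Fin K => if (j : ℕ) < (k : ℕ) then some (w (d j)) else none)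
        = (fun j : Fin K => if (j : ℕ) < (k : ℕ) then some (w' (d j)) else none))
      ↔ ∀ i ∈ S d, w i = w' i := by
    intro d w w'
    simp only [S, Finset.mem_image, Finset.mem_filter, Finset.mem_univ, true_and]
    constructor
    · rintro h _ ⟨j, hj, rfl⟩
      have := congrFun h j
      simpa [hj] using this
    · intro h
      funext j
      by_cases hj : (j : ℕ) < k
      · simp [hj, h _ ⟨j, hj, rfl⟩]
      · simp [hj]
  rw [BetaBound.cmi_eq]
  rw [BetaBound.L_prod _ (fun d w => (G w, BetaBound.R (insert (d κ) (S d)) w)) ?_,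
    BetaBound.L_prod _ (fun d w => (BetaBound.R (S d) w)) ?_,
    BetaBound.L_prod _ (fun d w => (BetaBound.R (insert (d κ) (S d)) w)) ?_,
    BetaBound.L_prod _ (fun d w => (G w, BetaBound.R (S d) w)) ?_]
  rotate_left
  · intro a d a' d'
    simp only [Prod.mk.injEq, BetaBound.R_eq]
    constructor
    · rintro ⟨h1, h2, rfl⟩
      exact ⟨rfl, h1, (hP _ _ _).1 h2⟩
    · rintro ⟨rfl, h1, h2⟩
      exact ⟨h1, (hP _ _ _).2 h2, rfl⟩
  · intro a d a' d'
    simp only [Prod.mk.injEq, BetaBound.R_eq, Finset.forall_mem_insert]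
    constructor
    · rintro ⟨h1, h2, rfl⟩
      exact ⟨rfl, h1, (hP _ _ _).1 h2⟩
    · rintro ⟨rfl, h1, h2⟩
      exact ⟨h1, (hP _ _ _).2 h2, rfl⟩
  · intro a d a' d'
    simp only [Prod.mk.injEq, BetaBound.R_eq]
    constructor
    · rintro ⟨h2, rfl⟩
      exact ⟨rfl, (hP _ _ _).1 h2⟩
    · rintro ⟨rfl, h2⟩
      exact ⟨(hP _ _ _).2 h2, rfl⟩
  · intro a d a' d'
    simp only [Prod.mk.injEq, BetaBound.R_eq, Finset.forall_mem_insert]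
    constructor
    · rintro ⟨h1, h3, h2, rfl⟩
      exact ⟨rfl, h3, h1, (hP _ _ _).1 h2⟩
    · rintro ⟨rfl, h3, h1, h2⟩
      exact ⟨h1, h3, (hP _ _ _).2 h2, rfl⟩
  -- the size of the range of `G`
  let I : Finset (∀ i : Fin K, Option (V i)) := Fintype.piFinset fun i : Fin K =>
    if (i : ℕ) ≤ (k : ℕ) then Finset.univ.image some else {none}
  have hI : ∀ w, G w ∈ I := by
    intro w
    simp only [I, Fintype.mem_piFinset, hG]
    intro i
    split_ifs <;> simp
  set x : ℝ := (2 : ℝ) ^ ((F : ℝ) * M) with hx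
  have hx0 : 0 < x := by positivity
  have hIc : (I.card : ℝ) ≤ x ^ ((k : ℕ) + 1) := by
    simp only [I, Fintype.card_piFinset]
    push_cast
    have h1 : ∀ i : Fin K, (((if (i : ℕ) ≤ (k : ℕ) then Finset.univ.image some else {none} :
        Finset (Option (V i))).card : ℕ) : ℝ) ≤ if (i : ℕ) ≤ (k : ℕ) then x else 1 := by
      intro i
      split_ifs
      · rw [Finset.card_image_of_injective _ (Option.some_injective _), Finset.card_univ]
        exact (Nat.cast_le.2 (hV i)).trans (Nat.floor_le hx0.le)
      · simp
    refine (Finset.prod_le_prod (fun i _ => Nat.cast_nonneg _) fun i _ => h1 i).trans ?_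
    rw [Finset.prod_ite]
    simp only [Finset.prod_const, one_pow, mul_one]
    apply le_of_eq
    congr 1
    have : (Finset.univ.filter fun i : Fin K => (i : ℕ) ≤ (k : ℕ)) = Finset.Iic κ := by
      ext i; simp [Fin.le_def, hκv]
    rw [this, Fin.card_Iic, hκv]
  have hb := BetaBound.avg hN κ S (by
      intro d d' h
      simp only [S]
      refine Finset.image_congr ?_
      intro j hj
      apply h
      rintro rfl
      simp [hκv] at hj)
    (fun n S => BetaBound.phi G (insert n S) - BetaBound.phi G S) _
    (fun S => BetaBound.phi_bound G S I hI (x ^ ((k : ℕ) + 1)) (by positivity) hIc)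
  have hlog : Real.logb 2 (x ^ ((k : ℕ) + 1)) = ((k : ℕ) + 1 : ℝ) * (F * M) := by
    rw [Real.logb_pow, hx, Real.logb_rpow (by norm_num) (by norm_num)]
    push_cast; rfl
  rw [hlog] at hb
  have hsum : (∑ d, BetaBound.L (fun w => (G w, BetaBound.R (insert (d κ) (S d)) w))
      + ∑ d, BetaBound.L (fun w : Fin N → Fin (2 ^ F) => BetaBound.R (S d) w)
      - ∑ d, BetaBound.L (fun w : Fin N → Fin (2 ^ F) => BetaBound.R (insert (d κ) (S d)) w)
      - ∑ d, BetaBound.L (fun w => (G w, BetaBound.R (S d) w)))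
      = ∑ d, (BetaBound.phi G (insert (d κ) (S d)) - BetaBound.phi G (S d)) := by
    rw [← Finset.sum_add_distrib, ← Finset.sum_sub_distrib, ← Finset.sum_sub_distrib]
    refine Finset.sum_congr rfl fun d _ => ?_
    unfold BetaBound.phi
    ring
  rw [hsum, Fintype.card_prod]
  have hA : (0 : ℝ) < Fintype.card (Fin N → Fin (2 ^ F)) := by exact_mod_cast Fintype.card_pos
  have hB : (0 : ℝ) < Fintype.card (Fin K → Fin N) := by exact_mod_cast Fintype.card_pos
  have hN' : (0 : ℝ) < N := by exact_mod_cast hN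
  have hF' : (0 : ℝ) < F := by exact_mod_cast hF
  rw [Nat.cast_mul, one_div, ← div_eq_inv_mul, div_div, div_le_div_iff₀ (by positivity) hN']
  linarith
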